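/- arXiv:2210.16603 — 2 statements merged into one kernel-verified Lean document; each statement's English description precedes it below -/
import Mathlib

section
/- The 4-dimensional spined cube SQ_4 is not vertex-transitive. -/
/-!
With coordinates indexed from `0`, deleting the edges that flip `x₃` cuts `SQ_4` into two layers,
each a Cayley graph of `(ZMod 2)³`: the generators are `e₀, e₁, e₂` on the layer `x₃ = 0`, and
`e₀ + e₁, e₁ + e₂, e₂` on the layer `x₃ = 1`. Both layers are 3-cubes, and their adjacency
matrices `A` and `B` commute because the group is abelian. In the fifth power of the adjacency
matrix `[A, 1; 1, B]` of `SQ_4`, the pure powers of `A` and of `B` contribute equally to the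
numbers of closed walks of length 5 at `(y, 0)` and at `(y, 1)`, so these numbers differ by the
diagonal entry of `A²B - AB²`. That entry is `4 - 2`: two of the sums of two distinct generators
of the first layer, `e₀ + e₁` and `e₁ + e₂`, are generators of the second, each counted in both
orders, but only one of the sums of two distinct generators of the second layer,
`(e₁ + e₂) + e₂ = e₁`, is a generator of the first.
-/

/-- The "difference vector" of the neighbor rules of the spined cube, `i` being the
0-based index of the flipped bit. -/
def sqDelta (n : ℕ) (x : Fin n → ZMod 2) (i : Fin n) : Fin n → ZMod 2 :=
  fun j =>
    (if j = i then 1 else 0) +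
    (if i.val + 5 ≤ n then
      (if j.val = i.val + 1 then x ⟨n - 2, by have := i.isLt; omega⟩ else 0) +
      (if j.val = i.val + 2 then x ⟨n - 1, by have := i.isLt; omega⟩ else 0)
    else if n ≤ i.val + 2 then 0
    else (if j.val = i.val + 1 then x ⟨n - 1, by have := i.isLt; omega⟩ else 0))

/-- The `n`-dimensional spined cube `SQ_n`. -/
def spinedCube (n : ℕ) : SimpleGraph (Fin n → ZMod 2) :=
  SimpleGraph.fromRel (fun x y => ∃ i : Fin n, y = x + sqDelta n x i)

open Matrix SimpleGraph

section ClosedWalks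

variable {V W α : Type*} [Fintype V] [DecidableEq V] [Fintype W] [DecidableEq W]

theorem adjMatrix_pow_apply_of_iso [Semiring α] {G : SimpleGraph V} {H : SimpleGraph W}
    [DecidableRel G.Adj] [DecidableRel H.Adj] (f : G ≃g H) (k : ℕ) (u v : V) :
    (H.adjMatrix α ^ k) (f u) (f v) = (G.adjMatrix α ^ k) u v := by
  have hpow : reindexAlgEquiv ℕ α f.toEquiv (G.adjMatrix α ^ k) = H.adjMatrix α ^ k := by
    rw [map_pow, coe_reindexAlgEquiv]
    exact congrArg (· ^ k) (f.reindex_adjMatrix α)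
  rw [← hpow, coe_reindexAlgEquiv, reindex_apply, submatrix_apply]
  exact congrArg₂ _ (f.symm_apply_apply u) (f.symm_apply_apply v)

theorem fromBlocks_one_one_pow_five [Semiring α] {A B : Matrix V V α} (h : Commute A B) :
    fromBlocks A 1 1 B ^ 5 =
      fromBlocks
        (A ^ 5 + 4 • A ^ 3 + 3 • A + 3 • (A ^ 2 * B) + 2 • (A * B ^ 2) + B ^ 3 + 2 • B)
        (A ^ 4 + A ^ 3 * B + A ^ 2 * B ^ 2 + A * B ^ 3 + B ^ 4
          + 3 • A ^ 2 + 4 • (A * B) + 3 • B ^ 2 + 1)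
        (A ^ 4 + A ^ 3 * B + A ^ 2 * B ^ 2 + A * B ^ 3 + B ^ 4
          + 3 • A ^ 2 + 4 • (A * B) + 3 • B ^ 2 + 1)
        (B ^ 5 + 4 • B ^ 3 + 3 • B + 3 • (A * B ^ 2) + 2 • (A ^ 2 * B) + A ^ 3 + 2 • A) := by
  have hBA : B * A = A * B := h.eq.symm
  have hBA_left (M : Matrix V V α) : B * (A * M) = A * (B * M) := h.symm.left_comm M
  simp only [pow_succ, pow_zero, one_mul, mul_one, fromBlocks_multiply, add_mul, mul_assoc,
    hBA, hBA_left]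
  congr 1 <;> abel

theorem fromBlocks_one_one_pow_five_apply_sub [Ring α] {A B : Matrix V V α} (h : Commute A B)
    {v : V} (hv : ∀ k, (A ^ k) v v = (B ^ k) v v) :
    (fromBlocks A 1 1 B ^ 5) (.inl v) (.inl v) - (fromBlocks A 1 1 B ^ 5) (.inr v) (.inr v) =
      (A ^ 2 * B) v v - (A * B ^ 2) v v := by
  have hv_one : A v v = B v v := by simpa using hv 1
  simp only [fromBlocks_one_one_pow_five h, fromBlocks_apply₁₁, fromBlocks_apply₂₂,
    Matrix.add_apply, Matrix.smul_apply, hv, hv_one]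
  abel

end ClosedWalks

section MatchedSum

variable {V : Type*} (G H : SimpleGraph V)

/-- Two graphs on the same vertex set, taken disjointly, with the two copies of each vertex joined
by an edge; this is how a graph of cube type arises from two layers of lower dimension. -/
def matchedSum : SimpleGraph (V ⊕ V) where
  Adj
    | .inl u, .inl v => G.Adj u v
    | .inr u, .inr v => H.Adj u v
    | .inl u, .inr v | .inr u, .inl v => u = v
  symm := ⟨by rintro (u | u) (v | v) h <;> exact h.symm⟩
  loopless := ⟨by rintro (u | u) h <;> exact h.ne rfl⟩

instance [DecidableEq V] [DecidableRel G.Adj] [DecidableRel H.Adj] :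
    DecidableRel (matchedSum G H).Adj
  | .inl u, .inl v => inferInstanceAs (Decidable (G.Adj u v))
  | .inr u, .inr v => inferInstanceAs (Decidable (H.Adj u v))
  | .inl u, .inr v | .inr u, .inl v => inferInstanceAs (Decidable (u = v))

theorem adjMatrix_matchedSum (α : Type*) [Zero α] [One α] [DecidableEq V] [DecidableRel G.Adj]
    [DecidableRel H.Adj] :
    (matchedSum G H).adjMatrix α = fromBlocks (G.adjMatrix α) 1 1 (H.adjMatrix α) := by
  ext (u | u) (v | v) <;> rfl

end MatchedSum

section CirculantGraph

variable {Γ : Type*} [DecidableEq Γ] (α : Type*)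

theorem adjMatrix_circulantGraph [Zero α] [One α] [AddGroup Γ] (S : Set Γ)
    [DecidablePred (· ∈ S)] :
    (circulantGraph S).adjMatrix α =
      circulant fun g => if (circulantGraph S).Adj g 0 then 1 else 0 := by
  ext u v
  simp [adjMatrix_apply, circulant_apply, sub_eq_zero]

theorem commute_adjMatrix_circulantGraph [CommSemiring α] [AddCommGroup Γ] [Fintype Γ]
    (S T : Set Γ) [DecidablePred (· ∈ S)] [DecidablePred (· ∈ T)] :
    Commute ((circulantGraph S).adjMatrix α) ((circulantGraph T).adjMatrix α) := by
  rw [adjMatrix_circulantGraph, adjMatrix_circulantGraph]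
  exact circulant_mul_comm _ _

end CirculantGraph

/-- The 3-cube as a Cayley graph of `(ZMod 2)³`: the layer `x₃ = 0` of `SQ_4`, with the last
coordinate dropped. -/
abbrev straightCube : SimpleGraph (Fin 3 → ZMod 2) :=
  circulantGraph {![1, 0, 0], ![0, 1, 0], ![0, 0, 1]}

/-- The 3-cube with respect to a sheared basis of `(ZMod 2)³`: the layer `x₃ = 1` of `SQ_4`, with
the last coordinate dropped. -/
abbrev skewCube : SimpleGraph (Fin 3 → ZMod 2) :=
  circulantGraph {![1, 1, 0], ![0, 1, 1], ![0, 0, 1]}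

instance : DecidableRel straightCube.Adj := inferInstance

instance : DecidableRel skewCube.Adj := inferInstance

/-- The linear change of basis from `straightCube` to `skewCube`. -/
def straightCubeIsoSkewCube : straightCube ≃g skewCube where
  toFun x := ![x 0, x 0 + x 1, x 1 + x 2]
  invFun y := ![y 0, y 0 + y 1, y 0 + y 1 + y 2]
  left_inv := by decide +kernel
  right_inv := by decide +kernel
  map_rel_iff' := by decide +kernel

instance (n : ℕ) : DecidableRel (spinedCube n).Adj :=
  fun _ _ => inferInstanceAs (Decidable (_ ∧ _))

theorem spinedCube_four_adj (x y : Fin 4 → ZMod 2) :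
    (spinedCube 4).Adj x y ↔
      y - x ∈ ({![1, x 3, 0, 0], ![0, 1, x 3, 0], ![0, 0, 1, 0], ![0, 0, 0, 1]} : Set _) := by
  revert x y
  decide +kernel

/-- The decomposition of `SQ_4` into its layers `x₃ = 0` (left) and `x₃ = 1` (right). -/
def matchedSumIsoSpinedCubeFour : matchedSum straightCube skewCube ≃g spinedCube 4 where
  toFun := Sum.elim (fun y => ![y 0, y 1, y 2, 0]) (fun y => ![y 0, y 1, y 2, 1])
  invFun x := if x 3 = 0 then .inl ![x 0, x 1, x 2] else .inr ![x 0, x 1, x 2]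
  left_inv := by
    rintro (y | y) <;> simp [← List.ofFn_inj]
  right_inv := by decide +kernel
  map_rel_iff' {u v} := by
    refine (spinedCube_four_adj _ _).trans ?_
    revert u v
    decide +kernel

theorem straightCube_sq_mul_skewCube_apply_zero :
    (straightCube.adjMatrix ℤ ^ 2 * skewCube.adjMatrix ℤ) 0 0 = 4 := by
  decide +kernel

theorem straightCube_mul_skewCube_sq_apply_zero :
    (straightCube.adjMatrix ℤ * skewCube.adjMatrix ℤ ^ 2) 0 0 = 2 := by
  decide +kernel

theorem straightCube_pow_apply_zero (k : ℕ) :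
    (straightCube.adjMatrix ℤ ^ k) 0 0 = (skewCube.adjMatrix ℤ ^ k) 0 0 := by
  have hzero : straightCubeIsoSkewCube 0 = 0 := by decide
  simpa only [hzero] using
    (adjMatrix_pow_apply_of_iso (α := ℤ) straightCubeIsoSkewCube k 0 0).symm

theorem spinedCube_four_pow_five_apply_sub :
    ((spinedCube 4).adjMatrix ℤ ^ 5) ![0, 0, 0, 0] ![0, 0, 0, 0] -
      ((spinedCube 4).adjMatrix ℤ ^ 5) ![0, 0, 0, 1] ![0, 0, 0, 1] = 2 := by
  let φ := matchedSumIsoSpinedCubeFour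
  calc
    _ = ((matchedSum straightCube skewCube).adjMatrix ℤ ^ 5) (.inl 0) (.inl 0) -
          ((matchedSum straightCube skewCube).adjMatrix ℤ ^ 5) (.inr 0) (.inr 0) :=
      congrArg₂ (· - ·) (adjMatrix_pow_apply_of_iso φ 5 (.inl 0) (.inl 0))
        (adjMatrix_pow_apply_of_iso φ 5 (.inr 0) (.inr 0))
    _ = (straightCube.adjMatrix ℤ ^ 2 * skewCube.adjMatrix ℤ) 0 0 -
          (straightCube.adjMatrix ℤ * skewCube.adjMatrix ℤ ^ 2) 0 0 := by
      rw [adjMatrix_matchedSum]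
      exact fromBlocks_one_one_pow_five_apply_sub (commute_adjMatrix_circulantGraph ℤ _ _)
        straightCube_pow_apply_zero
    _ = 4 - 2 := by
      rw [straightCube_sq_mul_skewCube_apply_zero, straightCube_mul_skewCube_sq_apply_zero]
    _ = 2 := by norm_num

/-- The 4-dimensional spined cube `SQ_4` is not vertex-transitive. -/
theorem sq4_not_vertexTransitive :
    ¬ ∀ u v : Fin 4 → ZMod 2, ∃ e : spinedCube 4 ≃g spinedCube 4, e u = v := by
  intro h
  obtain ⟨e, he⟩ := h ![0, 0, 0, 0] ![0, 0, 0, 1]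
  have hwalks := adjMatrix_pow_apply_of_iso (α := ℤ) e 5 ![0, 0, 0, 0] ![0, 0, 0, 0]
  have hsub := spinedCube_four_pow_five_apply_sub
  rw [he] at hwalks
  rw [hwalks, sub_self] at hsub
  exact two_ne_zero hsub.symm
end

section
/- For n ≥ 6, the spined cube SQ_n is not vertex-transitive. -/
/-!
An automorphism of a graph that maps `v` to `w` carries the pairs of vertices whose only common
neighbor is `v` to those whose only common neighbor is `w`. In `SQ_n` with `n ≥ 6` these pairs
reveal the last bit of `v`. If that bit is `0`, any two of the neighbors of `v` across the first
`n - 2` dimensions have a second common neighbor, since crossing such a dimension leaves the last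
two bits, and hence all difference vectors, unchanged; so every pair involves one of the remaining
two neighbors. If the last bit is `1`, then `v` is the only common neighbor of its neighbors
across dimensions `i` and `n - 3 + i` for `i = 0, 1, 2`, and these three pairs are disjoint.
-/

section UniqueCommonNeighbor

variable {V W : Type*}

/-- The graph joining distinct vertices whose only common neighbor in `G` is `v`, that is, whose
path through `v` lies on no four-cycle of `G`. -/
def uniqueCommonNeighborGraph (G : SimpleGraph V) (v : V) : SimpleGraph V where
  Adj a b := a ≠ b ∧ G.commonNeighbors a b = {v}
  symm.symm _ _ h := ⟨h.1.symm, by rw [G.commonNeighbors_symm, h.2]⟩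
  loopless.irrefl _ h := h.1 rfl

theorem uniqueCommonNeighborGraph_map_adj_iff {G : SimpleGraph V} {H : SimpleGraph W}
    (e : G ≃g H) (v a b : V) :
    (uniqueCommonNeighborGraph H (e v)).Adj (e a) (e b) ↔
      (uniqueCommonNeighborGraph G v).Adj a b := by
  have himage : H.commonNeighbors (e a) (e b) = e '' G.commonNeighbors a b := by
    ext w
    obtain ⟨u, rfl⟩ := e.surjective w
    simp [SimpleGraph.mem_commonNeighbors, e.map_adj_iff]
  have hsingleton : e '' G.commonNeighbors a b = {e v} ↔ G.commonNeighbors a b = {v} := by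
    rw [← Set.image_singleton, e.injective.image_injective.eq_iff]
  simp only [uniqueCommonNeighborGraph, himage, hsingleton, ne_eq, e.injective.eq_iff]

theorem vertexCoverNum_uniqueCommonNeighborGraph_apply {G : SimpleGraph V} {H : SimpleGraph W}
    (e : G ≃g H) (v : V) :
    (uniqueCommonNeighborGraph H (e v)).vertexCoverNum =
      (uniqueCommonNeighborGraph G v).vertexCoverNum :=
  (SimpleGraph.vertexCoverNum_congr
    ⟨e.toEquiv, uniqueCommonNeighborGraph_map_adj_iff e v _ _⟩).symm

theorem card_le_vertexCoverNum_of_matching {ι : Type*} {G : SimpleGraph V} {f g : ι → V}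
    (hadj : ∀ r, G.Adj (f r) (g r)) (hinj : Function.Injective (Sum.elim f g)) :
    ENat.card ι ≤ G.vertexCoverNum := by
  refine le_iInf₂ fun c hc ↦ ?_
  have hend : ∀ r, ∃ v ∈ c, v = f r ∨ v = g r := by grind [SimpleGraph.IsVertexCover]
  choose φ hφc hφ using hend
  have hφinj : Function.Injective φ := by
    rw [Sum.elim_injective] at hinj
    grind [Function.Injective]
  calc ENat.card ι ≤ ENat.card c :=
        ENat.card_le_card_of_injective (hφinj.codRestrict hφc)
    _ = c.encard := by simp

end UniqueCommonNeighbor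

section Delta

variable {n : ℕ} {x y : Fin n → ZMod 2} {i j k s t : Fin n}

theorem sqDelta_apply_self (x : Fin n → ZMod 2) (i : Fin n) : sqDelta n x i i = 1 := by
  simp [sqDelta]

theorem sqDelta_apply_of_lt (h : j < i) : sqDelta n x i j = 0 := by
  unfold sqDelta
  grind

theorem eq_of_sqDelta_apply_eq_of_le (h : ∀ j ≤ i, sqDelta n x i j = sqDelta n y k j) :
    i = k := by
  rcases lt_trichotomy i k with hlt | heq | hgt
  · have hi := h i le_rfl
    rw [sqDelta_apply_self, sqDelta_apply_of_lt hlt] at hi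
    exact absurd hi one_ne_zero
  · exact heq
  · have hk := h k hgt.le
    rw [sqDelta_apply_self, sqDelta_apply_of_lt hgt] at hk
    exact absurd hk zero_ne_one

theorem sqDelta_injective (x : Fin n → ZMod 2) : Function.Injective (sqDelta n x) :=
  fun _ _ h ↦ eq_of_sqDelta_apply_eq_of_le fun j _ ↦ congrFun h j

theorem sqDelta_of_le (hi : n ≤ i.val + 2) : sqDelta n x i = Pi.single i 1 := by
  funext j
  unfold sqDelta
  grind

theorem sqDelta_apply_last (ht : t.val + 1 = n) :
    sqDelta n x i t = if i = t then 1 else 0 := by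
  unfold sqDelta
  grind

theorem sqDelta_add_sqDelta_self (x : Fin n → ZMod 2) (i : Fin n) :
    sqDelta n (x + sqDelta n x i) i = sqDelta n x i := by
  -- Of the vectors that read `x`, only that of `i = n - 3` affects the last two bits: it may
  -- flip bit `n - 2`, but reads only bit `n - 1`.
  funext j
  simp only [sqDelta, Pi.add_apply]
  grind

theorem sqDelta_apply (hs : s.val + 2 = n) (ht : t.val + 1 = n) :
    sqDelta n x i j = (if j = i then 1 else 0) +
      (if i.val + 5 ≤ n then
        (if j.val = i.val + 1 then x s else 0) + (if j.val = i.val + 2 then x t else 0)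
      else if n ≤ i.val + 2 then 0
      else if j.val = i.val + 1 then x t else 0) := by
  have hs' : x s = x ⟨n - 2, by omega⟩ := congrArg x (Fin.ext (by grind))
  have ht' : x t = x ⟨n - 1, by omega⟩ := congrArg x (Fin.ext (by grind))
  rw [hs', ht', sqDelta]

theorem sqDelta_congr (hs : s.val + 2 = n) (ht : t.val + 1 = n)
    (hxys : x s = y s) (hxyt : x t = y t) : sqDelta n x i = sqDelta n y i := by
  funext j
  simp only [sqDelta_apply hs ht, hxys, hxyt]

theorem sqDelta_apply_penultimate (hs : s.val + 2 = n) (ht : t.val + 1 = n) :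
    sqDelta n x i s = if i = s then 1 else if i.val + 3 = n then x t else 0 := by
  rw [sqDelta_apply hs ht]
  grind

theorem sqDelta_apply_penultimate_of_last_eq_one (hs : s.val + 2 = n) (ht : t.val + 1 = n)
    (hx : x t = 1) : sqDelta n x i s = if n ≤ i.val + 3 ∧ i.val + 2 ≤ n then 1 else 0 := by
  rw [sqDelta_apply_penultimate hs ht]
  grind

theorem sqDelta_apply_succ (hs : s.val + 2 = n) (hi : i.val + 5 ≤ n) (hj : j.val = i.val + 1) :
    sqDelta n x i j = x s := by
  rw [sqDelta_apply hs (t := ⟨n - 1, by omega⟩) (by grind)]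
  grind

theorem last_eq_of_sqDelta_eq (ht : t.val + 1 = n) (hi : i.val + 3 ≤ n)
    (h : sqDelta n x i = sqDelta n y i) : x t = y t := by
  have hs : (⟨n - 2, by omega⟩ : Fin n).val + 2 = n := by grind
  by_cases hi5 : i.val + 5 ≤ n
  · have hi2 := congrFun h ⟨i + 2, by omega⟩
    simpa [sqDelta_apply hs ht, hi5, Fin.ext_iff] using hi2
  · have hi1 := congrFun h ⟨i + 1, by omega⟩
    simpa [sqDelta_apply hs ht, hi5, show ¬ n ≤ i.val + 2 by omega, Fin.ext_iff] using hi1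

end Delta

section Neighbor

variable {n : ℕ} {x : Fin n → ZMod 2} {i q t : Fin n}

/-- The neighbor of `x` in the spined cube across the dimension `i`, counted from `0`. -/
def sqNeighbor (x : Fin n → ZMod 2) (i : Fin n) : Fin n → ZMod 2 :=
  x + sqDelta n x i

theorem sqNeighbor_injective (x : Fin n → ZMod 2) : Function.Injective (sqNeighbor x) :=
  (add_right_injective x).comp (sqDelta_injective x)

theorem sqNeighbor_ne_self (x : Fin n → ZMod 2) (i : Fin n) : sqNeighbor x i ≠ x := by
  intro h
  have hi := congrFun h i
  simp [sqNeighbor, sqDelta_apply_self] at hi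

theorem sqNeighbor_sqNeighbor_self (x : Fin n → ZMod 2) (i : Fin n) :
    sqNeighbor (sqNeighbor x i) i = x := by
  simp only [sqNeighbor, sqDelta_add_sqDelta_self, add_assoc, ZModModule.add_self, add_zero]

theorem sqNeighbor_apply_last_of_ne (ht : t.val + 1 = n) (hit : i ≠ t) :
    sqNeighbor x i t = x t := by
  simp [sqNeighbor, sqDelta_apply_last ht, hit]

theorem spinedCube_adj_iff {y : Fin n → ZMod 2} :
    (spinedCube n).Adj x y ↔ ∃ i, sqNeighbor x i = y := by
  rw [spinedCube, SimpleGraph.fromRel_adj]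
  constructor
  · rintro ⟨-, ⟨i, rfl⟩ | ⟨i, rfl⟩⟩
    · exact ⟨i, rfl⟩
    · exact ⟨i, sqNeighbor_sqNeighbor_self y i⟩
  · rintro ⟨i, rfl⟩
    exact ⟨(sqNeighbor_ne_self x i).symm, .inl ⟨i, rfl⟩⟩

theorem spinedCube_adj_sqNeighbor (x : Fin n → ZMod 2) (i : Fin n) :
    (spinedCube n).Adj x (sqNeighbor x i) :=
  spinedCube_adj_iff.mpr ⟨i, rfl⟩

theorem uniqueCommonNeighborGraph_adj_sqNeighbor (hiq : i ≠ q)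
    (h : ∀ j l, sqNeighbor (sqNeighbor x i) j = sqNeighbor (sqNeighbor x q) l → j = i ∨ l = q) :
    (uniqueCommonNeighborGraph (spinedCube n) x).Adj (sqNeighbor x i) (sqNeighbor x q) := by
  refine ⟨(sqNeighbor_injective x).ne hiq, Set.eq_singleton_iff_unique_mem.mpr ⟨?_, ?_⟩⟩
  · exact ⟨(spinedCube_adj_sqNeighbor x i).symm, (spinedCube_adj_sqNeighbor x q).symm⟩
  · rintro w ⟨hiw, hqw⟩
    obtain ⟨j, rfl⟩ := spinedCube_adj_iff.mp hiw
    obtain ⟨l, hl⟩ := spinedCube_adj_iff.mp hqw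
    rcases h j l hl.symm with rfl | rfl
    · exact sqNeighbor_sqNeighbor_self x j
    · rw [← hl, sqNeighbor_sqNeighbor_self]

theorem sqDelta_add_sqDelta_eq_of_sqNeighbor_eq {j l : Fin n}
    (h : sqNeighbor (sqNeighbor x i) j = sqNeighbor (sqNeighbor x q) l) :
    sqDelta n x i + sqDelta n (sqNeighbor x i) j =
      sqDelta n x q + sqDelta n (sqNeighbor x q) l :=
  add_left_cancel (a := x) (by simpa only [sqNeighbor, add_assoc] using h)

theorem uniqueCommonNeighborGraph_adj_sqNeighbor_last (ht : t.val + 1 = n) (hi : i.val + 3 ≤ n) :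
    (uniqueCommonNeighborGraph (spinedCube n) x).Adj (sqNeighbor x i) (sqNeighbor x t) := by
  have hit : i ≠ t := by omega
  refine uniqueCommonNeighborGraph_adj_sqNeighbor hit fun j l h ↦ ?_
  by_contra! hne
  have hdelta := sqDelta_add_sqDelta_eq_of_sqNeighbor_eq h
  have hjt : j = t := by
    have hlast := congrFun hdelta t
    simp only [Pi.add_apply, sqDelta_apply_last ht] at hlast
    grind
  subst hjt
  have hil : sqDelta n x i = sqDelta n (sqNeighbor x j) l := by
    rw [sqDelta_of_le (i := j) (by omega), sqDelta_of_le (i := j) (by omega), add_comm] at hdelta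
    exact add_left_cancel hdelta
  obtain rfl : i = l := eq_of_sqDelta_apply_eq_of_le fun c _ ↦ congrFun hil c
  have hflip := last_eq_of_sqDelta_eq ht hi hil
  simp [sqNeighbor, sqDelta_apply_last ht] at hflip

end Neighbor

section LastBitZero

variable {n : ℕ} {x : Fin n → ZMod 2} {i k s t : Fin n}

theorem sqDelta_sqNeighbor_of_last_eq_zero (hs : s.val + 2 = n) (ht : t.val + 1 = n)
    (hx : x t = 0) (his : i < s) : sqDelta n (sqNeighbor x i) k = sqDelta n x k := by
  apply sqDelta_congr hs ht
  · simp [sqNeighbor, sqDelta_apply_penultimate hs ht, hx, his.ne]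
  · exact sqNeighbor_apply_last_of_ne ht (by omega)

theorem sqNeighbor_comm_of_last_eq_zero (hs : s.val + 2 = n) (ht : t.val + 1 = n)
    (hx : x t = 0) (his : i < s) (hks : k < s) :
    sqNeighbor (sqNeighbor x i) k = sqNeighbor (sqNeighbor x k) i := by
  calc sqNeighbor (sqNeighbor x i) k
      = x + sqDelta n x i + sqDelta n x k :=
        congrArg (sqNeighbor x i + ·) (sqDelta_sqNeighbor_of_last_eq_zero hs ht hx his)
    _ = x + sqDelta n x k + sqDelta n x i := add_right_comm _ _ _
    _ = sqNeighbor (sqNeighbor x k) i :=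
        (congrArg (sqNeighbor x k + ·) (sqDelta_sqNeighbor_of_last_eq_zero hs ht hx hks)).symm

theorem isVertexCover_pair_sqNeighbor_of_last_eq_zero (hs : s.val + 2 = n)
    (ht : t.val + 1 = n) (hx : x t = 0) :
    (uniqueCommonNeighborGraph (spinedCube n) x).IsVertexCover
      {sqNeighbor x s, sqNeighbor x t} := by
  rintro a b ⟨hab, hcommon⟩
  obtain ⟨hax, hbx⟩ : x ∈ (spinedCube n).commonNeighbors a b := hcommon ▸ rfl
  obtain ⟨i, rfl⟩ := spinedCube_adj_iff.mp hax.symm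
  obtain ⟨k, rfl⟩ := spinedCube_adj_iff.mp hbx.symm
  by_contra! hcover
  have his : i < s := by grind
  have hks : k < s := by grind
  have hmem : sqNeighbor (sqNeighbor x i) k ∈
      (spinedCube n).commonNeighbors (sqNeighbor x i) (sqNeighbor x k) := by
    refine ⟨spinedCube_adj_sqNeighbor _ k, ?_⟩
    rw [sqNeighbor_comm_of_last_eq_zero hs ht hx his hks]
    exact spinedCube_adj_sqNeighbor _ i
  rw [hcommon, Set.mem_singleton_iff] at hmem
  apply hab
  rw [← sqNeighbor_sqNeighbor_self (sqNeighbor x i) k, hmem]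

theorem vertexCoverNum_le_two_of_last_eq_zero (hn : 2 ≤ n) (ht : t.val + 1 = n) (hx : x t = 0) :
    (uniqueCommonNeighborGraph (spinedCube n) x).vertexCoverNum ≤ 2 := by
  let s : Fin n := ⟨n - 2, by omega⟩
  have hcover := isVertexCover_pair_sqNeighbor_of_last_eq_zero (s := s) (by grind) ht hx
  have hst : s ≠ t := by grind
  simpa only [Set.encard_pair ((sqNeighbor_injective x).ne hst)] using hcover.vertexCoverNum_le

end LastBitZero

section LastBitOne

variable {n : ℕ} {x : Fin n → ZMod 2} {i q t : Fin n}

theorem uniqueCommonNeighborGraph_adj_sqNeighbor_of_last_eq_one (ht : t.val + 1 = n) (hx : x t = 1)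
    (hi : i.val + 5 ≤ n) (hq : n ≤ q.val + 3) (hqt : q.val + 2 ≤ n) :
    (uniqueCommonNeighborGraph (spinedCube n) x).Adj (sqNeighbor x i) (sqNeighbor x q) := by
  have hiq : i ≠ q := by omega
  refine uniqueCommonNeighborGraph_adj_sqNeighbor hiq fun j l h ↦ .inl ?_
  obtain ⟨s, hs⟩ : ∃ s : Fin n, s.val + 2 = n := ⟨⟨n - 2, by omega⟩, by grind⟩
  have hdelta (c : Fin n) := congrFun (sqDelta_add_sqDelta_eq_of_sqNeighbor_eq h) c
  simp only [Pi.add_apply] at hdelta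
  have hi_last : sqNeighbor x i t = 1 := by
    rw [sqNeighbor_apply_last_of_ne ht (by omega), hx]
  have hq_last : sqNeighbor x q t = 1 := by
    rw [sqNeighbor_apply_last_of_ne ht (by omega), hx]
  -- Only dimensions `n - 3` and `n - 2` flip bit `n - 2`; `q` is one of them and `i` is not.
  have hflip : n ≤ l.val + 3 ∨ n ≤ j.val + 3 := by
    have hpenultimate := hdelta s
    simp only [sqDelta_apply_penultimate_of_last_eq_one hs ht, hx, hi_last, hq_last]
      at hpenultimate
    grind
  have hlow {k : Fin n} {y : Fin n → ZMod 2} (hk : n ≤ k.val + 3) {c : Fin n} (hc : c ≤ i) :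
      sqDelta n y k c = 0 := sqDelta_apply_of_lt (by omega)
  rcases hflip with hl | hj
  · have hij : ∀ c ≤ i, sqDelta n x i c = sqDelta n (sqNeighbor x i) j c := fun c hc ↦ by
      simpa [hlow hq hc, hlow hl hc, CharTwo.add_eq_zero] using hdelta c
    exact (eq_of_sqDelta_apply_eq_of_le hij).symm
  · have hil : ∀ c ≤ i, sqDelta n x i c = sqDelta n (sqNeighbor x q) l c := fun c hc ↦ by
      simpa [hlow hq hc, hlow hj hc] using hdelta c
    obtain rfl : i = l := eq_of_sqDelta_apply_eq_of_le hil
    -- Crossing `i` adds bit `n - 2` to bit `i + 1`, and crossing `q` first flips bit `n - 2`.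
    have hsucc := hdelta ⟨i + 1, by omega⟩
    rw [sqDelta_apply_of_lt (i := j) (by grind), sqDelta_apply_of_lt (i := q) (by grind),
      sqDelta_apply_succ hs hi rfl, sqDelta_apply_succ hs hi rfl, sqNeighbor, Pi.add_apply,
      sqDelta_apply_penultimate_of_last_eq_one hs ht hx, if_pos ⟨hq, hqt⟩] at hsucc
    simp at hsucc

theorem three_le_vertexCoverNum_of_last_eq_one (hn : 6 ≤ n) (ht : t.val + 1 = n) (hx : x t = 1) :
    3 ≤ (uniqueCommonNeighborGraph (spinedCube n) x).vertexCoverNum := by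
  let p : Fin 3 → Fin n := fun r ↦ ⟨r, by omega⟩
  let q : Fin 3 → Fin n := fun r ↦ ⟨n - 3 + r, by omega⟩
  have hpq : Function.Injective (Sum.elim p q) := by
    rw [Sum.elim_injective]
    grind [Function.Injective]
  have hadj (r : Fin 3) : (uniqueCommonNeighborGraph (spinedCube n) x).Adj
      (sqNeighbor x (p r)) (sqNeighbor x (q r)) := by
    by_cases hr : r.val = 2
    · have hqt : q r = t := Fin.ext (by grind)
      rw [hqt]
      exact uniqueCommonNeighborGraph_adj_sqNeighbor_last ht (by grind)
    · exact uniqueCommonNeighborGraph_adj_sqNeighbor_of_last_eq_one ht hx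
        (by grind) (by grind) (by grind)
  have hinj : Function.Injective (Sum.elim (sqNeighbor x ∘ p) (sqNeighbor x ∘ q)) := by
    rw [← Sum.comp_elim]
    exact (sqNeighbor_injective x).comp hpq
  simpa using card_le_vertexCoverNum_of_matching hadj hinj

end LastBitOne

theorem spinedCube_iso_apply_last {n : ℕ} (hn : 6 ≤ n) {t : Fin n} (ht : t.val + 1 = n)
    (e : spinedCube n ≃g spinedCube n) (x : Fin n → ZMod 2) : e x t = x t := by
  have hiff (y : Fin n → ZMod 2) :
      y t = 0 ↔ (uniqueCommonNeighborGraph (spinedCube n) y).vertexCoverNum ≤ 2 := by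
    refine ⟨vertexCoverNum_le_two_of_last_eq_zero (by omega) ht, fun hle ↦ ?_⟩
    by_contra hy
    have hge := three_le_vertexCoverNum_of_last_eq_one hn ht (Fin.eq_one_of_ne_zero _ hy)
    exact absurd (hge.trans hle) (by decide)
  have hzero : e x t = 0 ↔ x t = 0 := by
    rw [hiff, hiff, vertexCoverNum_uniqueCommonNeighborGraph_apply]
  by_cases hx : x t = 0
  · rw [hx, hzero.mpr hx]
  · rw [Fin.eq_one_of_ne_zero _ hx, Fin.eq_one_of_ne_zero _ (mt hzero.mp hx)]

/-- For `n ≥ 6`, the spined cube `SQ_n` is not vertex-transitive. -/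
theorem spinedCube_not_vertexTransitive (n : ℕ) (hn : 6 ≤ n) :
    ¬ ∀ u v : Fin n → ZMod 2, ∃ e : spinedCube n ≃g spinedCube n, e u = v := by
  intro htransitive
  let t : Fin n := ⟨n - 1, by omega⟩
  obtain ⟨e, he⟩ := htransitive 0 (Pi.single t 1)
  have hlast := spinedCube_iso_apply_last hn (t := t) (by grind) e 0
  simp [he] at hlast
end
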